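/- arXiv:0804.3411 — 5 statements merged into one kernel-verified Lean document; each statement's English description precedes it below -/
import Mathlib

section
/- Let A be a real M×N matrix of rank m < N, let Q be an m×N matrix with orthonormal rows and L an M×m matrix of rank m such that A = LQ, and let U be an N×(N−m) matrix with orthonormal columns whose columns span the null space of A. For any subset J ⊆ {1,…,N} with complement J^c, the submatrix A(:,J) consisting of the columns of A indexed by J has a non-trivial null vector if and only if the submatrix U(J^c,:) consisting of the rows of U indexed by J^c has a non-trivial null vector. -/
open Matrix

/-!
Extending a null vector of `A(:,J)` by zero turns it into a null vector of `A` supported in `J`.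
As `U` is injective with range the null space of `A`, such a vector is `U d` for a unique `d`, and
being supported in `J` means that `U(Jᶜ,:)` annihilates `d`. Both conditions therefore say that the
null space of `A` contains a nonzero vector supported in `J`.
-/

theorem extend_comp_zero_of_forall_notMem_range {α β M : Type*} [Zero M] {e : α → β}
    (he : Function.Injective e) {y : β → M} (hy : ∀ i ∉ Set.range e, y i = 0) :
    Function.extend e (y ∘ e) 0 = y := by
  funext i
  by_cases hi : i ∈ Set.range e
  · obtain ⟨j, rfl⟩ := hi
    exact he.extend_apply _ _ j
  · rw [Function.extend_apply' _ _ _ hi, hy i hi, Pi.zero_apply]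

section

variable {R m n k ι κ : Type*} [NonUnitalNonAssocSemiring R] [Fintype n]

theorem submatrix_cols_mulVec_eq_mulVec_extend [Fintype ι] (A : Matrix m n R) {e : ι → n}
    (he : Function.Injective e) (x : ι → R) :
    A.submatrix id e *ᵥ x = A *ᵥ Function.extend e x 0 := by
  funext i
  refine Fintype.sum_of_injective e he _ _ (fun j hj => ?_) (fun j => ?_)
  · rw [Function.extend_apply' _ _ _ hj, Pi.zero_apply, mul_zero]
  · simp only [he.extend_apply, submatrix_apply, id]

theorem exists_ne_zero_submatrix_cols_mulVec_eq_zero_iff [Fintype ι] (A : Matrix m n R)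
    {e : ι → n} (he : Function.Injective e) :
    (∃ x ≠ 0, A.submatrix id e *ᵥ x = 0) ↔
      ∃ y ≠ 0, A *ᵥ y = 0 ∧ ∀ i ∉ Set.range e, y i = 0 := by
  constructor
  · rintro ⟨x, hx, hAx⟩
    refine ⟨Function.extend e x 0, fun h => hx ?_, ?_, fun i hi => ?_⟩
    · rw [← Function.extend_comp he x 0, h, Pi.zero_comp]
    · rw [← submatrix_cols_mulVec_eq_mulVec_extend A he, hAx]
    · exact Function.extend_apply' _ _ _ hi
  · rintro ⟨y, hy, hAy, hsupp⟩
    have hext : Function.extend e (y ∘ e) 0 = y := extend_comp_zero_of_forall_notMem_range he hsupp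
    refine ⟨y ∘ e, fun h => hy ?_, ?_⟩
    · rw [← hext, h, Function.extend_zero]
    · rw [submatrix_cols_mulVec_eq_mulVec_extend A he, hext, hAy]

theorem exists_ne_zero_submatrix_rows_mulVec_eq_zero_iff (U : Matrix m n R)
    (hU : ∀ d, U *ᵥ d = 0 → d = 0) (f : κ → m) :
    (∃ d ≠ 0, U.submatrix f id *ᵥ d = 0) ↔
      ∃ y ≠ 0, y ∈ Set.range U.mulVec ∧ ∀ i ∈ Set.range f, y i = 0 := by
  constructor
  · rintro ⟨d, hd, hUd⟩
    exact ⟨U *ᵥ d, mt (hU d) hd, ⟨d, rfl⟩, Set.forall_mem_range.mpr (congrFun hUd)⟩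
  · rintro ⟨_, hy, ⟨d, rfl⟩, hsupp⟩
    refine ⟨d, ?_, funext (Set.forall_mem_range.mp hsupp)⟩
    rintro rfl
    exact hy (mulVec_zero U)

theorem eq_zero_of_mulVec_eq_zero_of_mul_eq_one {S : Type*} [Semiring S] [Fintype m]
    [DecidableEq n] {V : Matrix n m S} {U : Matrix m n S} (hVU : V * U = 1) {d : n → S}
    (hd : U *ᵥ d = 0) : d = 0 := by
  rw [← one_mulVec d, ← hVU, ← mulVec_mulVec, hd, mulVec_zero]

theorem column_submatrix_null_iff_row_submatrix_null_general [Fintype k] [DecidableEq n]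
    (A : Matrix m n R) (U : Matrix n k R) (hU : ∀ d, U *ᵥ d = 0 → d = 0)
    (hUA : Function.Exact U.mulVec A.mulVec) (J : Finset n) :
    (∃ x ≠ 0, A.submatrix id ((↑) : J → n) *ᵥ x = 0) ↔
      ∃ d ≠ 0, U.submatrix ((↑) : (Jᶜ : Finset n) → n) id *ᵥ d = 0 := by
  rw [exists_ne_zero_submatrix_cols_mulVec_eq_zero_iff A Subtype.val_injective,
    exists_ne_zero_submatrix_rows_mulVec_eq_zero_iff U hU]
  simp only [hUA _, Subtype.range_coe_subtype, Set.mem_ofPred_eq, Finset.mem_compl]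

end

/-- With `A = L * Q` (`Q` with orthonormal rows, `L` of full rank `m`) and `U` an
`N × (N-m)` matrix with orthonormal columns whose columns span the null space of `A`, for any
set `J` of column indices, the column submatrix `A(:,J)` has a non-trivial null vector iff the
row submatrix `U(Jᶜ,:)` has a non-trivial null vector. -/
theorem column_submatrix_null_iff_row_submatrix_null
    (M N m : ℕ) (hm : m < N)
    (A : Matrix (Fin M) (Fin N) ℝ) (hrank : A.rank = m)
    (L : Matrix (Fin M) (Fin m) ℝ) (hL : L.rank = m)
    (Q : Matrix (Fin m) (Fin N) ℝ) (hQ : Q * Qᵀ = 1)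
    (hA : A = L * Q)
    (U : Matrix (Fin N) (Fin (N - m)) ℝ) (hU : Uᵀ * U = 1)
    (hUspan : LinearMap.range U.mulVecLin = LinearMap.ker A.mulVecLin)
    (J : Finset (Fin N)) :
    (∃ x : {j // j ∈ J} → ℝ, x ≠ 0 ∧
        (A.submatrix id (fun j : J => (j : Fin N))).mulVec x = 0) ↔
      (∃ d : Fin (N - m) → ℝ, d ≠ 0 ∧
        (U.submatrix (fun i : (Jᶜ : Finset (Fin N)) => (i : Fin N)) id).mulVec d = 0) := by
  exact column_submatrix_null_iff_row_submatrix_null_general A U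
    (fun _ => eq_zero_of_mulVec_eq_zero_of_mul_eq_one hU) (LinearMap.exact_iff.mpr hUspan.symm) J
end

section
/- Let A be a real M×N matrix of rank m < N and let U be an N×(N−m) matrix with orthonormal columns whose columns span the null space of A. A subset J ⊆ {1,…,N} is a circuit of A if and only if U(J^c,:) has a non-zero null vector and, for every k ∈ J, the matrix U(K,:) with K = J^c ∪ {k} has full rank. -/
open Matrix

/-- A set `J` of column indices of `A` is a circuit if the columns indexed by `J` are linearly
dependent but the columns indexed by any proper subset of `J` are linearly independent. -/
def IsCircuit {M N : Type*} (A : Matrix M N ℝ) (J : Finset N) : Prop :=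
  (¬ LinearIndependent ℝ fun j : J => fun i => A i j) ∧
    ∀ J' : Finset N, J' ⊂ J → LinearIndependent ℝ fun j : J' => fun i => A i j

/-!
A linear dependence among the columns of `A` indexed by `J` is a vector of `ker A` vanishing
on `Jᶜ`, that is, `U d` for a unique `d` killed by the rows of `U` indexed by `Jᶜ`. So the columns
in `J` are independent exactly when the rows of `U` in `Jᶜ` have full column rank. The circuit
condition only has to be tested on the maximal proper subsets `J \ {k}`, whose complements are
`Jᶜ ∪ {k}`.
-/

section LinearIndependence

variable {R l m n p : Type*} [CommRing R] [Fintype n]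

theorem linearIndependent_col_iff_forall_mulVec {B : Matrix m n R} :
    LinearIndependent R B.col ↔ ∀ x, B *ᵥ x = 0 → x = 0 := by
  rw [← mulVec_injective_iff]
  exact injective_iff_map_eq_zero B.mulVecLin

theorem linearIndepOn_col_iff {A : Matrix m n R} {s : Set n} :
    LinearIndepOn R A.col s ↔ ∀ x, A *ᵥ x = 0 → (∀ i ∉ s, x i = 0) → x = 0 := by
  have linearCombination_eq_mulVec (x : n → R) :
      Finsupp.linearCombination R A.col ((Finsupp.linearEquivFunOnFinite R R n).symm x) =
        A *ᵥ x := by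
    rw [Finsupp.linearCombination_eq_fintype_linearCombination_apply,
      Fintype.linearCombination_apply, mulVec_eq_sum]
    simp only [op_smul_eq_smul]
    rfl
  rw [linearIndepOn_iff, (Finsupp.linearEquivFunOnFinite R R n).symm.surjective.forall]
  refine forall_congr' fun x => ?_
  rw [linearCombination_eq_mulVec, Finsupp.mem_supported', LinearEquiv.map_eq_zero_iff]
  exact forall_comm

theorem rank_eq_card_iff_linearIndependent_col [Nontrivial R] {B : Matrix m n R} :
    B.rank = Fintype.card n ↔ LinearIndependent R B.col := by
  rw [rank_eq_finrank_span_cols, linearIndependent_iff_card_eq_finrank_span, eq_comm, Set.finrank]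

theorem linearIndepOn_col_compl_range_iff [Fintype p] {A : Matrix m n R} {U : Matrix n p R}
    (hU : LinearIndependent R U.col)
    (hker : LinearMap.range U.mulVecLin = LinearMap.ker A.mulVecLin) (f : l → n) :
    LinearIndepOn R A.col (Set.range f)ᶜ ↔ LinearIndependent R (U.submatrix f id).col := by
  have mem_ker_iff (x : n → R) : A *ᵥ x = 0 ↔ ∃ d, U *ᵥ d = x :=
    (SetLike.ext_iff.mp hker x).symm
  have submatrix_mulVec_eq_zero_iff (d : p → R) :
      U.submatrix f id *ᵥ d = 0 ↔ ∀ i ∉ (Set.range f)ᶜ, (U *ᵥ d) i = 0 := by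
    simp only [Set.notMem_compl_iff, Set.forall_mem_range]
    exact funext_iff
  have mulVec_eq_zero_iff (d : p → R) : U *ᵥ d = 0 ↔ d = 0 :=
    ⟨linearIndependent_col_iff_forall_mulVec.mp hU d, fun h => by rw [h, mulVec_zero]⟩
  simp only [linearIndepOn_col_iff, linearIndependent_col_iff_forall_mulVec, mem_ker_iff,
    forall_exists_index, forall_apply_eq_imp_iff, submatrix_mulVec_eq_zero_iff, mulVec_eq_zero_iff]

theorem linearIndependent_col_of_mul_eq_one [Finite p] [DecidableEq p] {V : Matrix p n R}
    {U : Matrix n p R} (h : V * U = 1) : LinearIndependent R U.col := by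
  cases nonempty_fintype p
  refine linearIndependent_col_iff_forall_mulVec.mpr fun d hd => ?_
  rw [← one_mulVec d, ← h, ← mulVec_mulVec, hd, mulVec_zero]

end LinearIndependence

theorem isCircuit_iff_forall_erase {m n : Type*} [DecidableEq n] {A : Matrix m n ℝ} {J : Finset n} :
    IsCircuit A J ↔
      ¬ LinearIndepOn ℝ A.col J ∧ ∀ k ∈ J, LinearIndepOn ℝ A.col (J.erase k) := by
  have isCircuit_iff_minimal :
      IsCircuit A J ↔ Minimal (fun S : Finset n => ¬ LinearIndepOn ℝ A.col S) J := by
    simp only [minimal_iff_forall_lt, not_not]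
    rfl
  rw [isCircuit_iff_minimal, Finset.minimal_iff_forall_erase fun s t ht hts hs =>
    ht (hs.mono (Finset.coe_subset.mpr hts))]
  simp only [not_not]

theorem isCircuit_iff_row_submatrices_of_null_basis_general {m n p : Type*} [Fintype n]
    [DecidableEq n] [Fintype p] {A : Matrix m n ℝ} {U : Matrix n p ℝ}
    (hU : LinearIndependent ℝ U.col)
    (hker : LinearMap.range U.mulVecLin = LinearMap.ker A.mulVecLin) (J : Finset n) :
    IsCircuit A J ↔
      (∃ d : p → ℝ, d ≠ 0 ∧ U.submatrix (fun i : (Jᶜ : Finset n) => (i : n)) id *ᵥ d = 0) ∧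
        ∀ k ∈ J,
          (U.submatrix (fun i : (Jᶜ ∪ {k} : Finset n) => (i : n)) id).rank = Fintype.card p := by
  have linearIndepOn_iff_compl {S T : Finset n} (hT : T = Sᶜ) : LinearIndepOn ℝ A.col S ↔
      LinearIndependent ℝ (U.submatrix (fun i : T => (i : n)) id).col := by
    have compl_range_eq : (Set.range fun i : T => (i : n))ᶜ = S := by
      rw [show (Set.range fun i : T => (i : n)) = T from Subtype.range_coe, hT,
        ← Finset.coe_compl, compl_compl]
    rw [← linearIndepOn_col_compl_range_iff hU hker, compl_range_eq]
  rw [isCircuit_iff_forall_erase]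
  refine and_congr ?_ (forall₂_congr fun k _ => ?_)
  · rw [linearIndepOn_iff_compl rfl, linearIndependent_col_iff_forall_mulVec]
    push Not
    exact exists_congr fun d => and_comm
  · have compl_erase_eq : Jᶜ ∪ {k} = (J.erase k)ᶜ := by
      rw [Finset.compl_erase, Finset.insert_eq, Finset.union_comm]
    rw [linearIndepOn_iff_compl compl_erase_eq, rank_eq_card_iff_linearIndependent_col]

/-- `J` is a circuit of `A` iff `U(Jᶜ,:)` has a non-zero null vector and for every
`k ∈ J`, the matrix `U(Jᶜ ∪ {k},:)` has full rank (namely `N - m`). -/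
theorem isCircuit_iff_row_submatrices_of_null_basis
    (M N m : ℕ) (hm : m < N)
    (A : Matrix (Fin M) (Fin N) ℝ) (hrank : A.rank = m)
    (U : Matrix (Fin N) (Fin (N - m)) ℝ) (hU : Uᵀ * U = 1)
    (hUspan : LinearMap.range U.mulVecLin = LinearMap.ker A.mulVecLin)
    (J : Finset (Fin N)) :
    IsCircuit A J ↔
      ((∃ d : Fin (N - m) → ℝ, d ≠ 0 ∧
          (U.submatrix (fun i : (Jᶜ : Finset (Fin N)) => (i : Fin N)) id).mulVec d = 0) ∧
        ∀ k ∈ J,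
          (U.submatrix (fun i : (Jᶜ ∪ {k} : Finset (Fin N)) => (i : Fin N)) id).rank = N - m) := by
  simpa only [Fintype.card_fin] using
    isCircuit_iff_row_submatrices_of_null_basis_general
      (linearIndependent_col_of_mul_eq_one hU) hUspan J
end

section
/- Let A be a real M×N matrix of rank m < N and let U be an N×(N−m) matrix with orthonormal columns whose columns span the null space of A. A subset J ⊆ {1,…,N} is a circuit of A if and only if there exists a subset I ⊆ {1,…,N} with I ∩ J = ∅ such that the null space of U(I,:) is one-dimensional, generated by a vector d, and supp(Ud) = J. -/
open Matrix

/-!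
A circuit of `A` is the same thing as the support of an elementary vector of `ker A`, that is, of a
nonzero vector of `ker A` of minimal support. Given such a vector `x` and any `y ∈ ker A` supported
in `supp x`, subtracting a multiple of `x` from `y` kills one coordinate of `supp x`, hence by
minimality kills the whole vector. So `x` is elementary exactly when the vectors of `ker A`
supported in `supp x` form the line through `x`. The parametrization `d ↦ U d` of `ker A` is
injective and turns "`U d` vanishes on `I`" into "`d` lies in the null space of `U(I,:)`". Taking
`I = Jᶜ` gives one direction; for the other, a vector supported in `J` vanishes on any `I` disjoint
from `J`.
-/

open Function (support)

section ElementaryVector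

variable {K ι : Type*}

/-- The elementary vectors of a subspace `V` of a coordinate space, in the sense of Rockafellar: the
nonzero vectors of `V` whose support is minimal for inclusion. For `V = ker A`, their supports are
the circuits of `A`. -/
structure IsElementaryVector [Semiring K] (V : Submodule K (ι → K)) (x : ι → K) : Prop where
  mem : x ∈ V
  ne_zero : x ≠ 0
  eq_zero_of_support_ssubset : ∀ y ∈ V, support y ⊂ support x → y = 0

theorem minimal_support_subset_iff_exists_isElementaryVector [Semiring K]
    {V : Submodule K (ι → K)} {J : Finset ι} :
    Minimal (fun J' : Finset ι => ∃ x ∈ V, x ≠ 0 ∧ support x ⊆ J') J ↔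
      ∃ x, IsElementaryVector V x ∧ support x = J := by
  constructor
  · intro hJ
    obtain ⟨x, hxV, hx0, hxJ⟩ := hJ.prop
    have J_subset_of_support_subset {y : ι → K} (hyV : y ∈ V) (hy0 : y ≠ 0)
        (hyJ : support y ⊆ J) : (J : Set ι) ⊆ support y := by
      lift support y to Finset ι using J.finite_toSet.subset hyJ with S hS
      exact hJ.le_of_le ⟨y, hyV, hy0, hS.ge⟩ (Finset.coe_subset.1 hyJ)
    have hxJ_eq : support x = J := hxJ.antisymm (J_subset_of_support_subset hxV hx0 hxJ)
    refine ⟨x, ⟨hxV, hx0, fun y hyV hyx => ?_⟩, hxJ_eq⟩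
    rw [hxJ_eq] at hyx
    by_contra hy0
    exact hyx.not_subset (J_subset_of_support_subset hyV hy0 hyx.subset)
  · rintro ⟨x, hx, hxJ⟩
    refine ⟨⟨x, hx.mem, hx.ne_zero, hxJ.subset⟩, ?_⟩
    rintro J' ⟨y, hyV, hy0, hyJ'⟩ hJ'
    by_contra hJJ'
    have hJ'x : (J' : Set ι) ⊂ support x := hxJ ▸ Finset.coe_ssubset.2 ⟨hJ', hJJ'⟩
    exact hy0 (hx.eq_zero_of_support_ssubset y hyV (hyJ'.trans_ssubset hJ'x))

variable [Field K] {V : Submodule K (ι → K)} {x : ι → K}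

theorem IsElementaryVector.mem_span_singleton_of_support_subset (hx : IsElementaryVector V x)
    {y : ι → K} (hy : y ∈ V) (hyx : support y ⊆ support x) : y ∈ Submodule.span K {x} := by
  obtain ⟨j, hj : x j ≠ 0⟩ := Function.ne_iff.1 hx.ne_zero
  set z := y - (y j / x j) • x with hz
  have hzj : z j = 0 := by simp [hz, hj]
  have hzx : support z ⊆ support x := by
    intro i hzi hxi
    have hyi : y i = 0 := by_contra fun h => hyx h hxi
    exact hzi (by simp [hz, hxi, hyi])
  have hz0 : z = 0 :=
    hx.eq_zero_of_support_ssubset z (V.sub_mem hy (V.smul_mem _ hx.mem))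
      ⟨hzx, fun h => h hj hzj⟩
  exact Submodule.mem_span_singleton.2 ⟨_, (sub_eq_zero.1 hz0).symm⟩

theorem isElementaryVector_iff_forall_mem_span_singleton :
    IsElementaryVector V x ↔
      x ∈ V ∧ x ≠ 0 ∧ ∀ y ∈ V, support y ⊆ support x → y ∈ Submodule.span K {x} := by
  refine ⟨fun hx => ⟨hx.mem, hx.ne_zero, fun _ => hx.mem_span_singleton_of_support_subset⟩, ?_⟩
  rintro ⟨hxV, hx0, hspan⟩
  refine ⟨hxV, hx0, fun y hyV hyx => ?_⟩
  obtain ⟨c, rfl⟩ := Submodule.mem_span_singleton.1 (hspan y hyV hyx.subset)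
  have hc : c = 0 := by
    by_contra hc
    exact hyx.ne (Function.support_const_smul_of_ne_zero c x hc)
  rw [hc, zero_smul]

theorem isElementaryVector_range_iff {W : Type*} [AddCommGroup W] [Module K W]
    {f : W →ₗ[K] ι → K} (hf : Function.Injective f) {d : W} :
    IsElementaryVector (LinearMap.range f) (f d) ↔
      d ≠ 0 ∧ ∀ e, support (f e) ⊆ support (f d) → e ∈ Submodule.span K {d} := by
  have mem_span_iff (e : W) : f e ∈ Submodule.span K {f d} ↔ e ∈ Submodule.span K {d} := by
    simp only [Submodule.mem_span_singleton, ← map_smul, hf.eq_iff]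
  simp [isElementaryVector_iff_forall_mem_span_singleton, mem_span_iff, map_eq_zero_iff f hf]

end ElementaryVector

section Matrix

variable {K M N P : Type*}

theorem not_linearIndepOn_col_iff_exists_mem_ker [CommRing K] [Fintype N] (A : Matrix M N K)
    (J : Finset N) :
    ¬ LinearIndepOn K A.col (J : Set N) ↔
      ∃ x ∈ LinearMap.ker A.mulVecLin, x ≠ 0 ∧ support x ⊆ J := by
  have mulVec_eq_sum_of_support_subset {x : N → K} (hx : support x ⊆ J) :
      A *ᵥ x = ∑ j ∈ J, x j • A.col j := by
    have hsub : ∀ j ∈ Finset.univ, j ∉ J → x j • A.col j = 0 := fun j _ hj => by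
      rw [Function.notMem_support.1 fun h => hj (hx h), zero_smul]
    rw [Finset.sum_subset J.subset_univ hsub]
    simp [mulVec_eq_sum, Matrix.col_def]
  rw [not_linearIndepOn_finset_iff]
  constructor
  · rintro ⟨g, hg, j, hjJ, hgj⟩
    let x : N → K := (J : Set N).indicator g
    have hxJ : support x ⊆ J := Set.support_indicator_subset
    have hxg : ∀ i ∈ J, x i = g i := fun i hi => Set.indicator_of_mem hi g
    refine ⟨x, ?_, Function.ne_iff.2 ⟨j, by rwa [hxg j hjJ]⟩, hxJ⟩
    rw [LinearMap.mem_ker, mulVecLin_apply, mulVec_eq_sum_of_support_subset hxJ, ← hg]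
    exact Finset.sum_congr rfl fun i hi => by rw [hxg i hi]
  · rintro ⟨x, hAx, hx0, hxJ⟩
    obtain ⟨j, hj : x j ≠ 0⟩ := Function.ne_iff.1 hx0
    exact ⟨x, (mulVec_eq_sum_of_support_subset hxJ).symm.trans hAx, j, hxJ hj, hj⟩

theorem minimal_not_linearIndepOn_col_iff_exists_isElementaryVector [CommRing K] [Fintype N]
    (A : Matrix M N K) (J : Finset N) :
    Minimal (fun J' : Finset N => ¬ LinearIndepOn K A.col (J' : Set N)) J ↔
      ∃ x, IsElementaryVector (LinearMap.ker A.mulVecLin) x ∧ support x = J := by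
  simp only [not_linearIndepOn_col_iff_exists_mem_ker,
    minimal_support_subset_iff_exists_isElementaryVector]

theorem mem_ker_submatrix_rows_iff_disjoint_support [CommSemiring K] [Fintype P]
    (U : Matrix N P K) (I : Finset N) (d : P → K) :
    d ∈ LinearMap.ker (U.submatrix (fun i : I => (i : N)) id).mulVecLin ↔
      Disjoint (I : Set N) (support (U *ᵥ d)) := by
  have submatrix_mulVec : U.submatrix (fun i : I => (i : N)) id *ᵥ d = fun i : I => (U *ᵥ d) i :=
    rfl
  simp [LinearMap.mem_ker, submatrix_mulVec, funext_iff, Set.disjoint_left]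

theorem isElementaryVector_mulVec_iff_exists_ker_submatrix_rows_eq_span [Field K] [Finite N]
    [Fintype P] {U : Matrix N P K} (hU : Function.Injective U.mulVec) {d : P → K} {J : Finset N}
    (hJ : support (U *ᵥ d) = J) :
    IsElementaryVector (LinearMap.range U.mulVecLin) (U *ᵥ d) ↔
      d ≠ 0 ∧ ∃ I : Finset N, Disjoint I J ∧
        LinearMap.ker (U.submatrix (fun i : I => (i : N)) id).mulVecLin =
          Submodule.span K {d} := by
  classical
  have := Fintype.ofFinite N
  refine (isElementaryVector_range_iff (f := U.mulVecLin) hU).trans (and_congr_right fun _ => ?_)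
  simp only [mulVecLin_apply, hJ]
  constructor
  · refine fun hspan => ⟨Jᶜ, disjoint_compl_left, le_antisymm (fun e he => hspan e ?_) ?_⟩
    · rw [mem_ker_submatrix_rows_iff_disjoint_support, Finset.coe_compl] at he
      exact Set.disjoint_compl_left_iff_subset.1 he
    · rw [Submodule.span_singleton_le_iff_mem, mem_ker_submatrix_rows_iff_disjoint_support, hJ]
      exact Finset.disjoint_coe.2 disjoint_compl_left
  · rintro ⟨I, hIJ, hker⟩ e heJ
    rw [← hker, mem_ker_submatrix_rows_iff_disjoint_support]
    exact (Finset.disjoint_coe.2 hIJ).mono_right heJ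

theorem isCircuit_iff_minimal_not_linearIndepOn_col (A : Matrix M N ℝ) (J : Finset N) :
    IsCircuit A J ↔ Minimal (fun J' : Finset N => ¬ LinearIndepOn ℝ A.col (J' : Set N)) J := by
  simp only [minimal_iff_forall_lt, not_not]
  rfl

theorem isCircuit_iff_exists_disjoint_rows_one_dim_nullspace_general [Field K] [Fintype N]
    [Fintype P] (A : Matrix M N K) (U : Matrix N P K) (hU : Function.Injective U.mulVec)
    (hUspan : LinearMap.range U.mulVecLin = LinearMap.ker A.mulVecLin) (J : Finset N) :
    Minimal (fun J' : Finset N => ¬ LinearIndepOn K A.col (J' : Set N)) J ↔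
      ∃ I : Finset N, Disjoint I J ∧
        ∃ d : P → K, d ≠ 0 ∧
          LinearMap.ker (U.submatrix (fun i : I => (i : N)) id).mulVecLin =
            Submodule.span K {d} ∧
          support (U *ᵥ d) = J := by
  rw [minimal_not_linearIndepOn_col_iff_exists_isElementaryVector, ← hUspan]
  constructor
  · rintro ⟨x, hx, hxJ⟩
    obtain ⟨d, rfl⟩ := hx.mem
    obtain ⟨hd0, I, hIJ, hker⟩ :=
      (isElementaryVector_mulVec_iff_exists_ker_submatrix_rows_eq_span hU hxJ).1 hx
    exact ⟨I, hIJ, d, hd0, hker, hxJ⟩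
  · rintro ⟨I, hIJ, d, hd0, hker, hdJ⟩
    exact ⟨U *ᵥ d, (isElementaryVector_mulVec_iff_exists_ker_submatrix_rows_eq_span hU hdJ).2
      ⟨hd0, I, hIJ, hker⟩, hdJ⟩

end Matrix

/-- `J` is a circuit of `A` iff there is a set `I` of row indices of `U`, disjoint
from `J`, such that the null space of `U(I,:)` is one-dimensional, generated by a vector `d`,
and `supp (U d) = J`. -/
theorem isCircuit_iff_exists_disjoint_rows_one_dim_nullspace
    (M N m : ℕ) (hm : m < N)
    (A : Matrix (Fin M) (Fin N) ℝ) (hrank : A.rank = m)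
    (U : Matrix (Fin N) (Fin (N - m)) ℝ) (hU : Uᵀ * U = 1)
    (hUspan : LinearMap.range U.mulVecLin = LinearMap.ker A.mulVecLin)
    (J : Finset (Fin N)) :
    IsCircuit A J ↔
      ∃ I : Finset (Fin N), Disjoint I J ∧
        ∃ d : Fin (N - m) → ℝ, d ≠ 0 ∧
          LinearMap.ker (U.submatrix (fun i : I => (i : Fin N)) id).mulVecLin =
            Submodule.span ℝ {d} ∧
          Function.support (U.mulVec d) = (J : Set (Fin N)) := by
  have hU_inj : Function.Injective U.mulVec :=
    Function.LeftInverse.injective (g := Uᵀ.mulVec) fun d => by simp [hU]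
  exact (isCircuit_iff_minimal_not_linearIndepOn_col A J).trans
    (isCircuit_iff_exists_disjoint_rows_one_dim_nullspace_general A U hU_inj hUspan J)
end

section
/- Let β, γ be nonzero reals with |γ|/|β| + |1+γ| < 1, and let y ∈ ℝ^L be nonzero. Then the vector x̃ = (0, −(γ/β)yᵀ, −(1+γ)yᵀ)ᵀ ∈ ℝ^{3L} has strictly smaller l¹-norm than the vector x = (yᵀ, 0, 0)ᵀ ∈ ℝ^{3L}, i.e. ‖x̃‖₁ < ‖x‖₁. Moreover, if in addition γ ≠ −1, then x̃ has exactly twice as many nonzero entries as x. -/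
open Function

lemma encard_support_sumElim {ι κ M : Type*} [Zero M] (f : ι → M) (g : κ → M) :
    (support (Sum.elim f g)).encard = (support f).encard + (support g).encard := by
  have support_eq : support (Sum.elim f g) = Sum.inl '' support f ∪ Sum.inr '' support g := by
    simp only [support_eq_preimage, Set.preimage_sumElim]
  rw [support_eq, Set.encard_union_eq Set.disjoint_image_inl_image_inr,
    Sum.inl_injective.encard_image, Sum.inr_injective.encard_image]

lemma sum_abs_pos {ι G : Type*} [Fintype ι] [AddCommGroup G] [LinearOrder G]
    [IsOrderedAddMonoid G] {y : ι → G} (hy : y ≠ 0) : 0 < ∑ i, |y i| := by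
  obtain ⟨i, hi⟩ := ne_iff.mp hy
  exact Finset.sum_pos' (fun j _ ↦ abs_nonneg (y j)) ⟨i, Finset.mem_univ i, abs_pos.mpr hi⟩

section ScaledCopies

variable {ι R : Type*} [Fintype ι] [Ring R] [LinearOrder R]

lemma sum_abs_smul [IsOrderedRing R] (a : R) (y : ι → R) :
    ∑ i, |(a • y) i| = |a| * ∑ i, |y i| := by
  simp only [Pi.smul_apply, smul_eq_mul, abs_mul, Finset.mul_sum]

variable [IsStrictOrderedRing R]

lemma sum_abs_smul_add_sum_abs_smul_lt {a b : R} (hab : |a| + |b| < 1) {y : ι → R} (hy : y ≠ 0) :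
    ∑ i, |(a • y) i| + ∑ i, |(b • y) i| < ∑ i, |y i| := by
  rw [sum_abs_smul, sum_abs_smul, ← add_mul]
  exact mul_lt_of_lt_one_left (sum_abs_pos hy) hab

theorem l1_smaller_but_less_sparse_general {a b : R} (hab : |a| + |b| < 1)
    {y : ι → R} (hy : y ≠ 0) {x xt : ι ⊕ (ι ⊕ ι) → R}
    (hx : x = Sum.elim y (Sum.elim (0 : ι → R) (0 : ι → R)))
    (hxt : xt = Sum.elim (0 : ι → R) (Sum.elim (a • y) (b • y))) :
    ∑ j, |xt j| < ∑ j, |x j| ∧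
      (a ≠ 0 → b ≠ 0 → (support xt).ncard = 2 * (support x).ncard) := by
  subst hx hxt
  constructor
  · simpa only [Fintype.sum_sum_type, Sum.elim_inl, Sum.elim_inr, Pi.zero_apply, abs_zero,
      Finset.sum_const_zero, zero_add, add_zero] using sum_abs_smul_add_sum_abs_smul_lt hab hy
  · intro ha hb
    simp only [Set.ncard, encard_support_sumElim, support_const_smul_of_ne_zero _ y ha,
      support_const_smul_of_ne_zero _ y hb, support_zero, Set.encard_empty, zero_add, add_zero]
    rw [← two_mul, ENat.toNat_mul, ENat.toNat_ofNat]

end ScaledCopies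

/-- if `β, γ ≠ 0` with `|γ|/|β| + |1+γ| < 1` and `y ≠ 0`, then the vector
`x̃ = (0, -(γ/β) yᵀ, -(1+γ) yᵀ)ᵀ ∈ ℝ^{3L}` has strictly smaller `l¹`-norm than
`x = (yᵀ, 0, 0)ᵀ`; moreover, if `γ ≠ -1`, then `x̃` has exactly twice as many nonzero entries
as `x`. -/
theorem l1_smaller_but_less_sparse
    (L : ℕ) (β γ : ℝ) (hβ : β ≠ 0) (hγ : γ ≠ 0)
    (habs : |γ| / |β| + |1 + γ| < 1)
    (y : Fin L → ℝ) (hy : y ≠ 0)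
    (x xt : Fin L ⊕ (Fin L ⊕ Fin L) → ℝ)
    (hx : x = Sum.elim y (Sum.elim (fun _ => (0 : ℝ)) (fun _ => (0 : ℝ))))
    (hxt : xt = Sum.elim (fun _ => (0 : ℝ))
      (Sum.elim (fun k => -(γ / β) * y k) (fun k => -(1 + γ) * y k))) :
    (∑ j, |xt j|) < (∑ j, |x j|) ∧
      (γ ≠ -1 → (Function.support xt).ncard = 2 * (Function.support x).ncard) := by
  have hab : |-(γ / β)| + |-(1 + γ)| < 1 := by simpa only [abs_neg, abs_div] using habs
  exact (l1_smaller_but_less_sparse_general hab hy hx hxt).imp_right fun hcard hγ' ↦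
    hcard (neg_ne_zero.mpr (div_ne_zero hγ hβ))
      (neg_ne_zero.mpr (mt eq_neg_of_add_eq_zero_right hγ'))
end

section
/- Let N, m, n be integers with 1 ≤ n ≤ m+1 ≤ N, and set ρ = (m+1)/N and δ = (n−1)/N. Then C(N−n, m+1−n)/C(N, m+1) = ∏_{j=1}^{n} (m−n+j+1)/(N−n+j) ≥ ( ρ(ρ−δ)/(1−δ) )^{n/2}, where C(a,b) denotes the binomial coefficient. -/
/-!
Writing `k = m + 1`, the ratio of binomial coefficients is `∏_{i < n} (k - i) / (N - i)`. Pair the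
factor of index `i` with the one of index `j = n - 1 - i`: with `s = i + j = n - 1`,
`(k - i) (k - j) = k (k - s) + i j`, and likewise for `N`. Adding the same nonnegative `i j` to the
numerator and denominator of a fraction that is at most `1` can only increase it, so each pair is at
least `k (k - s) / (N (N - s)) = ρ (ρ - δ) / (1 - δ)`. The square of the product is made of `n` such
pairs.
-/

open Finset

theorem prod_Icc_one_eq_prod_range_sub {M : Type*} [CommMonoid M] (f : ℕ → M) (n : ℕ) :
    ∏ j ∈ Icc 1 n, f j = ∏ i ∈ range n, f (n - i) := by
  rw [range_eq_Ico, prod_Ico_reflect f 0 n.le_succ, Nat.add_sub_cancel_left, Nat.sub_zero,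
    Ico_add_one_right_eq_Icc]

theorem pow_succ_le_sq_prod_range_of_le_mul {R : Type*} [CommSemiring R] [PartialOrder R]
    [IsOrderedRing R] {f : ℕ → R} {c : R} {n : ℕ} (hc : 0 ≤ c)
    (hf : ∀ i j, i + j = n → c ≤ f i * f j) :
    c ^ (n + 1) ≤ (∏ i ∈ range (n + 1), f i) ^ 2 :=
  calc c ^ (n + 1) = ∏ _i ∈ range (n + 1), c := by rw [prod_const, card_range]
    _ ≤ ∏ i ∈ range (n + 1), f i * f (n - i) :=
      prod_le_prod (fun _ _ ↦ hc) fun i hi ↦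
        hf i (n - i) (Nat.add_sub_of_le (mem_range_succ_iff.mp hi))
    _ = (∏ i ∈ range (n + 1), f i) ^ 2 := by rw [prod_mul_distrib, prod_flip, sq]

theorem cast_descFactorial_eq_prod_range_sub {R : Type*} [CommRing R] (a n : ℕ) :
    (a.descFactorial n : R) = ∏ i ∈ range n, ((a : R) - i) := by
  rw [← descPochhammer_eval_eq_descFactorial, descPochhammer_eval_eq_prod_range]

section Field

variable {K : Type*} [Field K]

theorem choose_sub_div_choose_eq_choose_div_choose [CharZero K] {N k n : ℕ} (hnk : n ≤ k)
    (hkN : k ≤ N) :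
    ((N - n).choose (k - n) : K) / N.choose k = (k.choose n : K) / N.choose n := by
  have hk : (N.choose k : K) ≠ 0 := mod_cast (Nat.choose_pos hkN).ne'
  have hn : (N.choose n : K) ≠ 0 := mod_cast (Nat.choose_pos (hnk.trans hkN)).ne'
  rw [div_eq_div_iff hk hn, mul_comm, mul_comm (k.choose n : K)]
  exact_mod_cast (Nat.choose_mul hnk).symm

theorem choose_div_choose_eq_prod_range_sub_div_sub [CharZero K] (k N n : ℕ) :
    (k.choose n : K) / N.choose n = ∏ i ∈ range n, ((k : K) - i) / ((N : K) - i) := by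
  have hn : (n.factorial : K) ≠ 0 := mod_cast n.factorial_ne_zero
  rw [prod_div_distrib, ← cast_descFactorial_eq_prod_range_sub,
    ← cast_descFactorial_eq_prod_range_sub, Nat.descFactorial_eq_factorial_mul_choose,
    Nat.descFactorial_eq_factorial_mul_choose, Nat.cast_mul, Nat.cast_mul,
    mul_div_mul_left _ _ hn]

theorem div_mul_div_sub_div_div_one_sub_div {x y s : K} (hy : y ≠ 0) :
    x / y * (x / y - s / y) / (1 - s / y) = x * (x - s) / (y * (y - s)) := by
  rw [← sub_div, one_sub_div hy]
  field_simp

variable [LinearOrder K] [IsStrictOrderedRing K]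

theorem div_le_add_div_add_of_le {a b t : K} (hb : 0 < b) (hab : a ≤ b) (ht : 0 ≤ t) :
    a / b ≤ (a + t) / (b + t) := by
  rw [div_le_div_iff₀ hb (by positivity)]
  linear_combination t * hab

theorem mul_sub_add_div_le_sub_div_mul_sub_div {x y i j : K} (hi : 0 ≤ i) (hj : 0 ≤ j)
    (hx : i + j ≤ x) (hxy : x ≤ y) (hy : i + j < y) :
    x * (x - (i + j)) / (y * (y - (i + j))) ≤ (x - i) / (y - i) * ((x - j) / (y - j)) := by
  have hden : 0 < y * (y - (i + j)) := mul_pos (by linarith) (by linarith)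
  have hle : x * (x - (i + j)) ≤ y * (y - (i + j)) :=
    mul_le_mul hxy (by linarith) (by linarith) (by linarith)
  calc x * (x - (i + j)) / (y * (y - (i + j)))
      ≤ (x * (x - (i + j)) + i * j) / (y * (y - (i + j)) + i * j) :=
        div_le_add_div_add_of_le hden hle (mul_nonneg hi hj)
    _ = (x - i) / (y - i) * ((x - j) / (y - j)) := by
        rw [div_mul_div_comm]
        congr 1 <;> ring

end Field

theorem rpow_half_le_prod_range_sub_div_sub {x y : ℝ} {n : ℕ} (hx : n ≤ x) (hxy : x ≤ y)
    (hy : n < y) :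
    (x * (x - n) / (y * (y - n))) ^ (((n + 1 : ℕ) : ℝ) / 2) ≤
      ∏ i ∈ range (n + 1), (x - i) / (y - i) := by
  set c := x * (x - n) / (y * (y - n))
  have hx₀ : 0 ≤ x := n.cast_nonneg.trans hx
  have hc : 0 ≤ c := div_nonneg (mul_nonneg hx₀ (sub_nonneg.mpr hx))
    (mul_nonneg (hx₀.trans hxy) (sub_nonneg.mpr hy.le))
  have hprod : 0 ≤ ∏ i ∈ range (n + 1), (x - i) / (y - i) := by
    refine prod_nonneg fun i hi ↦ ?_
    have hin : (i : ℝ) ≤ n := mod_cast mem_range_succ_iff.mp hi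
    exact div_nonneg (by linarith) (by linarith)
  have hpair (i j : ℕ) (hij : i + j = n) : c ≤ (x - i) / (y - i) * ((x - j) / (y - j)) := by
    have hcast : (n : ℝ) = i + j := mod_cast hij.symm
    rw [hcast] at hx hy
    simpa only [c, hcast] using mul_sub_add_div_le_sub_div_mul_sub_div i.cast_nonneg
      j.cast_nonneg hx hxy hy
  rw [Real.rpow_div_two_eq_sqrt _ hc, Real.rpow_natCast]
  refine le_of_sq_le_sq ?_ hprod
  rw [← pow_mul, mul_comm, pow_mul, Real.sq_sqrt hc]
  exact pow_succ_le_sq_prod_range_of_le_mul hc hpair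

/-- for `1 ≤ n ≤ m + 1 ≤ N`, with `ρ = (m+1)/N` and `δ = (n-1)/N`,
`C(N-n, m+1-n) / C(N, m+1) = ∏_{j=1}^{n} (m-n+j+1)/(N-n+j) ≥ (ρ(ρ-δ)/(1-δ))^{n/2}`. -/
theorem detection_probability_bound
    (N m n : ℕ) (h1 : 1 ≤ n) (h2 : n ≤ m + 1) (h3 : m + 1 ≤ N)
    (ρ δ : ℝ) (hρ : ρ = ((m : ℝ) + 1) / N) (hδ : δ = ((n : ℝ) - 1) / N) :
    ((N - n).choose (m + 1 - n) : ℝ) / (N.choose (m + 1) : ℝ) =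
      (∏ j ∈ Finset.Icc 1 n, ((m : ℝ) - n + j + 1) / ((N : ℝ) - n + j)) ∧
    (ρ * (ρ - δ) / (1 - δ)) ^ ((n : ℝ) / 2) ≤
      ((N - n).choose (m + 1 - n) : ℝ) / (N.choose (m + 1) : ℝ) := by
  rw [choose_sub_div_choose_eq_choose_div_choose h2 h3,
    choose_div_choose_eq_prod_range_sub_div_sub]
  constructor
  · rw [prod_Icc_one_eq_prod_range_sub]
    refine prod_congr rfl fun i hi ↦ ?_
    rw [Nat.cast_sub (mem_range.mp hi).le]
    push_cast
    congr 1 <;> ring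
  · obtain ⟨s, rfl⟩ := Nat.exists_eq_add_of_le' h1
    have hsm : (s : ℝ) ≤ m := mod_cast Nat.le_of_succ_le_succ h2
    have hmN : (m : ℝ) + 1 ≤ N := mod_cast h3
    have hbase : ρ * (ρ - δ) / (1 - δ) = (m + 1 : ℕ) * ((m + 1 : ℕ) - s) / (N * (N - s)) := by
      have hN : (N : ℝ) ≠ 0 := Nat.cast_ne_zero.mpr (by lia)
      rw [hρ, hδ, Nat.cast_add_one, Nat.cast_add_one, add_sub_cancel_right,
        div_mul_div_sub_div_div_one_sub_div hN]
    rw [hbase]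
    exact rpow_half_le_prod_range_sub_div_sub (by push_cast; linarith) (mod_cast h3) (by linarith)
end
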